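/- For every register set automaton A there exist a transfer Petri net N and a marking M_F of N such that L(A) ≠ ∅ if and only if M_F is coverable in N. -/

import Mathlib

/-- A data word over alphabet `Sigma`, with data domain `𝔻 = ℕ`. -/
abbrev DataWord (Sigma : Type) : Type :=
  List (Sigma × ℕ)
/-- A transition `(src, letter, gIn, gNin, upd, tgt)` of a register set automaton.
In the update, `none` stands for the current input value `in`, and `some r`
for register `r`. -/
structure RsATrans (Sigma : Type) where
  src : ℕ
  letter : Sigma
  gIn : Finset ℕ
  gNin : Finset ℕ
  upd : ℕ → Finset (Option ℕ)
  tgt : ℕ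

/-- The register assignment obtained after taking transition `t` with current input
data value `d`, starting from the assignment `f`: each register gets the union of
the contents of the registers in its update set, together with `{d}` if the update
set contains `in`. -/
def RsATrans.apply {Sigma : Type} (t : RsATrans Sigma) (f : ℕ → Finset ℕ) (d : ℕ) :
    ℕ → Finset ℕ := fun r =>
  (t.upd r).biUnion fun o =>
    match o with
    | none => {d}
    | some r' => f r'

/-- A register set automaton (RsA); states and registers are drawn from `ℕ`. -/
structure RsA (Sigma : Type) where
  Q : Finset ℕ
  R : Finset ℕ
  Δ : Set (RsATrans Sigma)
  I : Finset ℕ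
  F : Finset ℕ
  finite_trans : Δ.Finite
  I_sub : I ⊆ Q
  F_sub : F ⊆ Q
  wf : ∀ t ∈ Δ, t.src ∈ Q ∧ t.tgt ∈ Q ∧ t.gIn ⊆ R ∧ t.gNin ⊆ R ∧
    Disjoint t.gIn t.gNin ∧ ∀ r ∈ R, ∀ r' : ℕ, some r' ∈ t.upd r → r' ∈ R

/-- One step of an RsA from configuration `c` to configuration `c'`, reading
the letter `x`. -/
def RsA.Step {Sigma : Type} (A : RsA Sigma) (c : ℕ × (ℕ → Finset ℕ)) (x : Sigma × ℕ)
    (c' : ℕ × (ℕ → Finset ℕ)) : Prop :=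
  ∃ t ∈ A.Δ, t.src = c.1 ∧ t.letter = x.1 ∧
    (∀ r ∈ t.gIn, x.2 ∈ c.2 r) ∧ (∀ r ∈ t.gNin, x.2 ∉ c.2 r) ∧
    c' = (t.tgt, t.apply c.2 x.2)

/-- `A.Run c w c'` holds iff `A` can read the data word `w` going from
configuration `c` to configuration `c'`. -/
inductive RsA.Run {Sigma : Type} (A : RsA Sigma) :
    (ℕ × (ℕ → Finset ℕ)) → DataWord Sigma → (ℕ × (ℕ → Finset ℕ)) → Prop where
  | nil (c : ℕ × (ℕ → Finset ℕ)) : RsA.Run A c [] c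
  | cons {c c' c'' : ℕ × (ℕ → Finset ℕ)} {x : Sigma × ℕ} {w : DataWord Sigma} :
      A.Step c x c' → RsA.Run A c' w c'' → RsA.Run A c (x :: w) c''

/-- The language of an RsA: words on which there exists an accepting run
starting from some initial state with all registers empty. -/
def RsA.Lang {Sigma : Type} (A : RsA Sigma) : Set (DataWord Sigma) :=
  { w | ∃ q₀ ∈ A.I, ∃ c : ℕ × (ℕ → Finset ℕ),
      A.Run (q₀, fun _ => ∅) w c ∧ c.1 ∈ A.F }
/-- A transition of a transfer Petri net: input and output multiplicities and
the transfer function. Places are drawn from `ℕ`. -/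
structure TPNTrans where
  inp : ℕ → ℕ
  out : ℕ → ℕ
  transfer : ℕ → ℕ

/-- A transfer Petri net (TPN); places are drawn from `ℕ`, markings are functions
`ℕ → ℕ` (only the values on `P` matter). -/
structure TPN where
  P : Finset ℕ
  T : Set TPNTrans
  M0 : ℕ → ℕ
  finite_T : T.Finite
  wf : ∀ t ∈ T, ∀ p ∈ P, t.transfer p ∈ P

/-- A TPN transition is enabled in a marking iff every place holds enough tokens. -/
def TPN.Enabled (N : TPN) (t : TPNTrans) (M : ℕ → ℕ) : Prop :=
  ∀ p ∈ N.P, t.inp p ≤ M p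

/-- Firing a TPN transition: remove the input tokens, transfer the remaining tokens
along the transfer function, and add the output tokens. -/
def TPN.fire (N : TPN) (t : TPNTrans) (M : ℕ → ℕ) : ℕ → ℕ := fun p =>
  t.out p + ∑ p' ∈ N.P.filter (fun p' => t.transfer p' = p), (M p' - t.inp p')

/-- The reachable markings of a TPN. -/
inductive TPN.Reachable (N : TPN) : (ℕ → ℕ) → Prop where
  | init : TPN.Reachable N N.M0
  | step {M : ℕ → ℕ} {t : TPNTrans} : TPN.Reachable N M → t ∈ N.T →
      N.Enabled t M → TPN.Reachable N (N.fire t M)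

/-- A marking `M` is coverable iff some reachable marking dominates it on all places. -/
def TPN.Coverable (N : TPN) (M : ℕ → ℕ) : Prop :=
  ∃ M', N.Reachable M' ∧ ∀ p ∈ N.P, M p ≤ M' p

/-! The proof formalizes the actual reduction.  The places of the net are the regions
(subsets `S` of the registers; the tokens in `S` are the data values lying in exactly
the registers of `S`) and the control points (`0` = before the start, `1` = accepted,
`q + 2` = automaton state `q`).
-/
namespace RsAtoTPN

open Finset

/-- Places, before they are coded as natural numbers. -/
abbrev Pl : Type := Finset ℕ ⊕ ℕ

def enc (p : Pl) : ℕ := Encodable.encode p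

def dec (n : ℕ) : Pl := (Encodable.decode n : Option Pl).getD (Sum.inr 0)

theorem dec_enc (p : Pl) : dec (enc p) = p := by simp [dec, enc]

theorem enc_inj {p q : Pl} : enc p = enc q ↔ p = q := by
  constructor
  · intro h
    rw [← dec_enc p, h, dec_enc]
  · rintro rfl; rfl

/-- Number of tokens put on a place: one on control point `k`, and one on region `i`. -/
def tok (k : ℕ) (i : Option (Finset ℕ)) : Pl → ℕ
  | Sum.inl S => if i = some S then 1 else 0
  | Sum.inr j => if j = k then 1 else 0

/-- Net transition moving control from `k` to `k'`, consuming a token from region `i`,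
producing one in region `o`, and transferring regions along `T`. -/
def gt (k k' : ℕ) (i o : Option (Finset ℕ)) (T : Finset ℕ → Finset ℕ) : TPNTrans where
  inp n := tok k i (dec n)
  out n := tok k' o (dec n)
  transfer n := enc (Sum.map T id (dec n))

variable {Sigma : Type}

/-- The region of a data value. -/
def reg (R : Finset ℕ) (f : ℕ → Finset ℕ) (d : ℕ) : Finset ℕ := R.filter fun r => d ∈ f r

/-- Where a transition moves region `S`. -/
def mv (R : Finset ℕ) (t : RsATrans Sigma) (S : Finset ℕ) : Finset ℕ :=
  R.filter fun r => ∃ r' ∈ S, some r' ∈ t.upd r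

/-- Registers which receive the input value. -/
def ins (R : Finset ℕ) (t : RsATrans Sigma) : Finset ℕ := R.filter fun r => none ∈ t.upd r

def ctrl (A : RsA Sigma) : Finset ℕ := insert 0 (insert 1 (A.Q.image (· + 2)))

def places (A : RsA Sigma) : Finset ℕ := (A.R.powerset.disjSum (ctrl A)).image enc

/-- Net transition simulating `t` on a value of region `S` (consumed from `i`). -/
def simT (A : RsA Sigma) (t : RsATrans Sigma) (S : Finset ℕ) (i : Option (Finset ℕ)) :
    TPNTrans :=
  gt (t.src + 2) (t.tgt + 2) i (some (mv A.R t S ∪ ins A.R t)) (mv A.R t)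

def initT (q : ℕ) : TPNTrans := gt 0 (q + 2) none none id

def finT (q : ℕ) : TPNTrans := gt (q + 2) 1 none none id

def trans (A : RsA Sigma) : Set TPNTrans :=
  initT '' (A.I : Set ℕ) ∪ finT '' (A.F : Set ℕ) ∪
    {x | ∃ t ∈ A.Δ, ∃ S ⊆ A.R, t.gIn ⊆ S ∧ Disjoint t.gNin S ∧
      (x = simT A t S (some S) ∨ S = ∅ ∧ x = simT A t S none)}

theorem trans_finite (A : RsA Sigma) : (trans A).Finite := by
  refine ((A.I.finite_toSet.image _).union (A.F.finite_toSet.image _)).union ?_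
  have h := A.finite_trans.prod A.R.powerset.finite_toSet
  refine ((h.image fun p => simT A p.1 p.2 (some p.2)).union
    (h.image fun p => simT A p.1 p.2 none)).subset ?_
  rintro x ⟨t, ht, S, hS, -, -, rfl | ⟨-, rfl⟩⟩
  · exact Or.inl ⟨(t, S), ⟨ht, by simpa using hS⟩, rfl⟩
  · exact Or.inr ⟨(t, S), ⟨ht, by simpa using hS⟩, rfl⟩

theorem gt_wf (A : RsA Sigma) (k k' : ℕ) (i o : Option (Finset ℕ))
    (T : Finset ℕ → Finset ℕ) (hT : ∀ S ⊆ A.R, T S ⊆ A.R) :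
    ∀ p ∈ places A, (gt k k' i o T).transfer p ∈ places A := by
  intro p hp
  simp only [places, mem_image] at hp ⊢
  obtain ⟨a, ha, rfl⟩ := hp
  refine ⟨_, ?_, rfl⟩
  rw [dec_enc]
  rcases a with S | j
  · simp only [inl_mem_disjSum, mem_powerset, Sum.map_inl] at ha ⊢
    exact hT S ha
  · simpa using ha

/-- The net. -/
def net (A : RsA Sigma) : TPN where
  P := places A
  T := trans A
  M0 n := tok 0 none (dec n)
  finite_T := trans_finite A
  wf := by
    rintro x ((⟨q, -, rfl⟩ | ⟨q, -, rfl⟩) | ⟨t, ht, S, hS, -, -, rfl | ⟨-, rfl⟩⟩)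
    · exact gt_wf A _ _ _ _ _ fun S h => h
    · exact gt_wf A _ _ _ _ _ fun S h => h
    · exact gt_wf A _ _ _ _ _ fun S h => filter_subset _ _
    · exact gt_wf A _ _ _ _ _ fun S h => filter_subset _ _

theorem sum_places (A : RsA Sigma) (g : ℕ → ℕ) :
    ∑ p ∈ places A, g p =
      ∑ S ∈ A.R.powerset, g (enc (Sum.inl S)) + ∑ j ∈ ctrl A, g (enc (Sum.inr j)) := by
  rw [places, sum_image (fun a _ b _ h => enc_inj.1 h), sum_disjSum]

theorem fire_inl (A : RsA Sigma) (k k' : ℕ) (i o : Option (Finset ℕ))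
    (T : Finset ℕ → Finset ℕ) (M : ℕ → ℕ) (S' : Finset ℕ) :
    (net A).fire (gt k k' i o T) M (enc (Sum.inl S')) =
      (if o = some S' then 1 else 0) +
      ∑ S ∈ A.R.powerset.filter (fun S => T S = S'),
        (M (enc (Sum.inl S)) - if i = some S then 1 else 0) := by
  simp only [TPN.fire, net]
  rw [sum_filter, sum_places, sum_filter]
  simp [gt, dec_enc, enc_inj, tok]

theorem fire_inr (A : RsA Sigma) (k k' : ℕ) (i o : Option (Finset ℕ))
    (T : Finset ℕ → Finset ℕ) (M : ℕ → ℕ) (j : ℕ) (hj : j ∈ ctrl A) :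
    (net A).fire (gt k k' i o T) M (enc (Sum.inr j)) =
      (if j = k' then 1 else 0) + (M (enc (Sum.inr j)) - if j = k then 1 else 0) := by
  simp only [TPN.fire, net]
  rw [sum_filter, sum_places]
  simp [gt, dec_enc, enc_inj, tok, hj]

/-- The marking `M` represents control point `c` and assignment `f`, where `V` is the
set of data values used so far. -/
structure Inv (A : RsA Sigma) (M : ℕ → ℕ) (c : ℕ) (f : ℕ → Finset ℕ) (V : Finset ℕ) :
    Prop where
  ctl : ∀ j ∈ ctrl A, M (enc (Sum.inr j)) = if j = c then 1 else 0
  rgn : ∀ S ⊆ A.R, M (enc (Sum.inl S)) = #{d ∈ V | reg A.R f d = S}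
  out : ∀ d, d ∉ V → reg A.R f d = ∅

theorem enabled_iff (A : RsA Sigma) (k k' : ℕ) (i o : Option (Finset ℕ))
    (T : Finset ℕ → Finset ℕ) (M : ℕ → ℕ) :
    (net A).Enabled (gt k k' i o T) M ↔
      (∀ S ⊆ A.R, i = some S → 1 ≤ M (enc (Sum.inl S))) ∧
      (k ∈ ctrl A → 1 ≤ M (enc (Sum.inr k))) := by
  constructor
  · intro h
    refine ⟨fun S hS hi => ?_, fun hk => ?_⟩
    · have := h (enc (Sum.inl S)) (mem_image_of_mem _ (by simpa using hS))
      simpa [gt, dec_enc, tok, hi] using this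
    · have := h (enc (Sum.inr k)) (mem_image_of_mem _ (by simpa using hk))
      simpa [gt, dec_enc, tok] using this
  · rintro ⟨h1, h2⟩ p hp
    obtain ⟨a, ha, rfl⟩ := mem_image.1 hp
    rcases a with S | j
    · have hS : S ⊆ A.R := by simpa using ha
      simp only [gt, dec_enc, tok]
      split_ifs with hi
      · exact h1 S hS hi
      · exact Nat.zero_le _
    · have hj : j ∈ ctrl A := by simpa using ha
      simp only [gt, dec_enc, tok]
      split_ifs with hi
      · subst hi; exact h2 hj
      · exact Nat.zero_le _

theorem Inv.fire {A : RsA Sigma} {M : ℕ → ℕ} {c : ℕ} {f : ℕ → Finset ℕ} {V : Finset ℕ}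
    (h : Inv A M c f V) (k' : ℕ) (i o : Option (Finset ℕ)) (T : Finset ℕ → Finset ℕ)
    (W V' : Finset ℕ) (f' : ℕ → Finset ℕ)
    (hW : ∀ S ⊆ A.R, #{d ∈ V | reg A.R f d = S} - (if i = some S then 1 else 0) =
      #{d ∈ W | reg A.R f d = S})
    (hV : ∀ S' ⊆ A.R, #{d ∈ V' | reg A.R f' d = S'} =
      (if o = some S' then 1 else 0) + #{d ∈ W | T (reg A.R f d) = S'})
    (hout : ∀ d, d ∉ V' → reg A.R f' d = ∅) :
    Inv A ((net A).fire (gt c k' i o T) M) k' f' V' where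
  ctl j hj := by
    rw [fire_inr _ _ _ _ _ _ _ _ hj, h.ctl j hj]
    simp
  rgn S' hS' := by
    rw [fire_inl, hV S' hS']
    congr 1
    have hm : ∀ d ∈ ({d ∈ W | T (reg A.R f d) = S'} : Finset ℕ),
        reg A.R f d ∈ A.R.powerset.filter (fun S => T S = S') := by
      intro d hd
      simp only [mem_filter, mem_powerset] at hd ⊢
      exact ⟨filter_subset _ _, hd.2⟩
    rw [card_eq_sum_card_fiberwise hm]
    refine sum_congr rfl fun S hS => ?_
    simp only [mem_filter, mem_powerset] at hS
    rw [h.rgn S hS.1, hW S hS.1, filter_filter]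
    congr 1
    ext d
    simp only [mem_filter]
    constructor
    · rintro ⟨h1, rfl⟩; exact ⟨h1, hS.2, rfl⟩
    · rintro ⟨h1, _, h2⟩; exact ⟨h1, h2⟩
  out := hout

theorem Inv.fire_id {A : RsA Sigma} {M : ℕ → ℕ} {c : ℕ} {f : ℕ → Finset ℕ} {V : Finset ℕ}
    (h : Inv A M c f V) (k' : ℕ) :
    Inv A ((net A).fire (gt c k' none none id) M) k' f V :=
  h.fire k' none none id V V f (by simp) (by simp) h.out

theorem reg_apply {A : RsA Sigma} {t : RsATrans Sigma} (ht : t ∈ A.Δ) (f : ℕ → Finset ℕ)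
    (d e : ℕ) : reg A.R (t.apply f d) e =
      if e = d then mv A.R t (reg A.R f e) ∪ ins A.R t else mv A.R t (reg A.R f e) := by
  have hw := (A.wf t ht).2.2.2.2.2
  have key : ∀ r ∈ A.R, (e ∈ t.apply f d r ↔
      (∃ r' ∈ reg A.R f e, some r' ∈ t.upd r) ∨ (none ∈ t.upd r ∧ e = d)) := by
    intro r hr
    simp only [RsATrans.apply, mem_biUnion, reg, mem_filter]
    constructor
    · rintro ⟨_ | r', h1, h2⟩
      · exact Or.inr ⟨h1, by simpa using h2⟩
      · exact Or.inl ⟨r', ⟨hw r hr r' h1, h2⟩, h1⟩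
    · rintro (⟨r', ⟨_, h2⟩, h1⟩ | ⟨h1, h2⟩)
      · exact ⟨some r', h1, h2⟩
      · exact ⟨none, h1, by simpa using h2⟩
  ext r
  by_cases hr : r ∈ A.R
  · have := key r hr
    split_ifs with he
    · simp only [mem_union, mv, ins, mem_filter, hr, true_and]
      rw [reg, mem_filter, this]; simp [hr, he]
    · simp only [mv, mem_filter, hr, true_and]
      rw [reg, mem_filter, this]; simp [hr, he]
  · have h1 : r ∉ reg A.R (t.apply f d) e := fun h => hr (mem_filter.1 h).1
    have h2 : r ∉ mv A.R t (reg A.R f e) := fun h => hr (mem_filter.1 h).1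
    have h3 : r ∉ ins A.R t := fun h => hr (mem_filter.1 h).1
    split_ifs <;> simp [h1, h2, h3]

theorem mv_empty (R : Finset ℕ) (t : RsATrans Sigma) : mv R t ∅ = ∅ := by simp [mv]

/-- Simulation of one automaton step reading the value `d`. -/
theorem Inv.fire_sim {A : RsA Sigma} {M : ℕ → ℕ} {f : ℕ → Finset ℕ} {V : Finset ℕ}
    {t : RsATrans Sigma} (ht : t ∈ A.Δ) (h : Inv A M (t.src + 2) f V) (d : ℕ)
    (i : Option (Finset ℕ))
    (hi : (d ∈ V ∧ i = some (reg A.R f d)) ∨ (d ∉ V ∧ i = none)) :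
    Inv A ((net A).fire (simT A t (reg A.R f d) i) M) (t.tgt + 2) (t.apply f d)
      (insert d V) := by
  refine h.fire _ _ _ _ (V.erase d) _ _ ?_ ?_ ?_
  · intro S _
    rw [filter_erase]
    rcases hi with ⟨hd, rfl⟩ | ⟨hd, rfl⟩
    · by_cases hS : reg A.R f d = S
      · rw [card_erase_of_mem (by simp [hd, hS])]; simp [hS]
      · rw [erase_eq_of_notMem (by simp [hS])]; simp [hS]
    · rw [erase_eq_of_notMem (by simp [hd])]; simp
  · intro S' _
    have hins : insert d V = insert d (V.erase d) := by
      ext x; by_cases hx : x = d <;> simp [hx]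
    have hcongr : ({e ∈ V.erase d | reg A.R (t.apply f d) e = S'} : Finset ℕ) =
        {e ∈ V.erase d | mv A.R t (reg A.R f e) = S'} := by
      refine filter_congr fun e he => ?_
      rw [reg_apply ht, if_neg (mem_erase.1 he).1]
    rw [hins, filter_insert, hcongr, reg_apply ht, if_pos rfl]
    split_ifs with h1 h2 h2
    · rw [card_insert_of_notMem (by simp), add_comm]
    · simp [h1] at h2
    · simp only [Option.some.injEq] at h2; exact absurd h2 h1
    · simp
  · intro e he
    simp only [mem_insert, not_or] at he
    rw [reg_apply ht, if_neg he.1, h.out e he.2, mv_empty]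

theorem run_snoc {A : RsA Sigma} {c c' c'' : ℕ × (ℕ → Finset ℕ)} {w : DataWord Sigma}
    {x : Sigma × ℕ} (h : A.Run c w c') (hs : A.Step c' x c'') : A.Run c (w ++ [x]) c'' := by
  induction h with
  | nil c => exact .cons hs (.nil _)
  | cons h1 _ ih => exact .cons h1 (ih hs)

theorem state_mem_ctrl {A : RsA Sigma} {q : ℕ} (hq : q ∈ A.Q) : q + 2 ∈ ctrl A := by
  simp [ctrl, hq]

/-- If the transition is enabled, its source control point is the current one. -/
theorem Inv.eq_of_enabled {A : RsA Sigma} {M : ℕ → ℕ} {c : ℕ} {f : ℕ → Finset ℕ}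
    {V : Finset ℕ} (h : Inv A M c f V) {k k' : ℕ} {i o : Option (Finset ℕ)}
    {T : Finset ℕ → Finset ℕ} (hk : k ∈ ctrl A)
    (he : (net A).Enabled (gt k k' i o T) M) : k = c := by
  have h1 := ((enabled_iff ..).1 he).2 hk
  rw [h.ctl k hk] at h1
  by_contra hne
  simp [hne] at h1

theorem inv_init (A : RsA Sigma) : Inv A (net A).M0 0 (fun _ => ∅) ∅ where
  ctl j _ := by simp [net, dec_enc, tok]
  rgn S _ := by simp [net, dec_enc, tok]
  out d _ := by simp [reg]

/-- Every reachable marking represents a reachable configuration. -/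
theorem sound (A : RsA Sigma) {M : ℕ → ℕ} (hM : (net A).Reachable M) :
    (∃ V, Inv A M 0 (fun _ => ∅) V) ∨
    (∃ q f V w, ∃ q₀ ∈ A.I, A.Run (q₀, fun _ => ∅) w (q, f) ∧ Inv A M (q + 2) f V) ∨
    A.Lang.Nonempty := by
  induction hM with
  | init => exact Or.inl ⟨_, inv_init A⟩
  | @step M x _ hx he ih =>
    rcases ih with ⟨V, hV⟩ | ⟨q, f, V, w, q₀, hq₀, hr, hV⟩ | hL
    · rcases hx with (⟨q, hq, rfl⟩ | ⟨q, hq, rfl⟩) | ⟨t, ht, S, hS, _, _, rfl | ⟨_, rfl⟩⟩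
      · exact Or.inr (Or.inl ⟨q, _, V, [], q, hq, .nil _, hV.fire_id _⟩)
      · have := hV.eq_of_enabled (state_mem_ctrl (A.F_sub hq)) he
        omega
      · have := hV.eq_of_enabled (state_mem_ctrl (A.wf t ht).1) he
        omega
      · have := hV.eq_of_enabled (state_mem_ctrl (A.wf t ht).1) he
        omega
    · rcases hx with (⟨p, hp, rfl⟩ | ⟨p, hp, rfl⟩) | ⟨t, ht, S, hS, hg, hn, hx⟩
      · have := hV.eq_of_enabled (by simp [ctrl]) he
        omega
      · have := hV.eq_of_enabled (state_mem_ctrl (A.F_sub hp)) he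
        obtain rfl : p = q := by omega
        exact Or.inr (Or.inr ⟨w, q₀, hq₀, _, hr, hp⟩)
      · have hsrc : t.src = q := by
          rcases hx with rfl | ⟨_, rfl⟩
          · have := hV.eq_of_enabled (state_mem_ctrl (A.wf t ht).1) he
            omega
          · have := hV.eq_of_enabled (state_mem_ctrl (A.wf t ht).1) he
            omega
        subst hsrc
        obtain ⟨d, i, rfl, rfl, hi⟩ : ∃ d i, reg A.R f d = S ∧ x = simT A t S i ∧
            ((d ∈ V ∧ i = some (reg A.R f d)) ∨ (d ∉ V ∧ i = none)) := by
          rcases hx with rfl | ⟨rfl, rfl⟩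
          · have h1 := ((enabled_iff ..).1 he).1 S hS rfl
            rw [hV.rgn S hS] at h1
            obtain ⟨d, hd⟩ := card_pos.1 h1
            obtain ⟨hdV, rfl⟩ := mem_filter.1 hd
            exact ⟨d, _, rfl, rfl, Or.inl ⟨hdV, rfl⟩⟩
          · obtain ⟨d, hd⟩ := Infinite.exists_notMem_finset V
            exact ⟨d, none, hV.out d hd, rfl, Or.inr ⟨hd, rfl⟩⟩
        refine Or.inr (Or.inl ⟨t.tgt, t.apply f d, insert d V, w ++ [(t.letter, d)], q₀, hq₀,
          run_snoc hr ⟨t, ht, rfl, rfl, fun r hr => ?_, fun r hr hd => ?_, rfl⟩,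
          hV.fire_sim ht d i hi⟩)
        · exact (mem_filter.1 (hg hr)).2
        · exact disjoint_left.1 hn hr (mem_filter.2 ⟨(A.wf t ht).2.2.2.1 hr, hd⟩)
    · exact Or.inr (Or.inr hL)

/-- Every run of the automaton is simulated by the net. -/
theorem complete (A : RsA Sigma) {c c' : ℕ × (ℕ → Finset ℕ)} {w : DataWord Sigma}
    (hr : A.Run c w c') : ∀ M V, (net A).Reachable M → Inv A M (c.1 + 2) c.2 V →
      ∃ M' V', (net A).Reachable M' ∧ Inv A M' (c'.1 + 2) c'.2 V' := by
  induction hr with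
  | nil c => exact fun M V hM h => ⟨M, V, hM, h⟩
  | @cons c c' c'' x w hs _ ih =>
    intro M V hM h
    obtain ⟨t, ht, hsrc, -, hg, hn, rfl⟩ := hs
    obtain ⟨q, f⟩ := c
    obtain ⟨a, d⟩ := x
    simp only at hsrc hg hn h ih
    subst hsrc
    have hwf := A.wf t ht
    have hgin : t.gIn ⊆ reg A.R f d := fun r hr => mem_filter.2 ⟨hwf.2.2.1 hr, hg r hr⟩
    have hgn : Disjoint t.gNin (reg A.R f d) :=
      disjoint_left.2 fun r hr h' => hn r hr (mem_filter.1 h').2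
    have hsub : reg A.R f d ⊆ A.R := filter_subset _ _
    obtain ⟨i, hi, hT, hen⟩ : ∃ i,
        ((d ∈ V ∧ i = some (reg A.R f d)) ∨ (d ∉ V ∧ i = none)) ∧
        simT A t (reg A.R f d) i ∈ trans A ∧
        (∀ S ⊆ A.R, i = some S → 1 ≤ M (enc (Sum.inl S))) := by
      by_cases hd : d ∈ V
      · refine ⟨_, Or.inl ⟨hd, rfl⟩, Or.inr ⟨t, ht, _, hsub, hgin, hgn, Or.inl rfl⟩, ?_⟩
        rintro S hS hSe
        obtain rfl := Option.some.inj hSe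
        rw [h.rgn _ hS]
        exact card_pos.2 ⟨d, by simp [hd]⟩
      · exact ⟨none, Or.inr ⟨hd, rfl⟩, Or.inr ⟨t, ht, _, hsub, hgin, hgn,
          Or.inr ⟨h.out d hd, rfl⟩⟩, by simp⟩
    refine ih _ (insert d V) (.step hM hT ((enabled_iff ..).2 ⟨hen, fun hk => ?_⟩))
      (h.fire_sim ht d i hi)
    rw [h.ctl _ hk]; simp

theorem main (A : RsA Sigma) :
    A.Lang.Nonempty ↔ (net A).Coverable (fun n => tok 1 none (dec n)) := by
  constructor
  · rintro ⟨w, q₀, hq₀, c, hr, hc⟩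
    have h0 := inv_init A
    have r1 : (net A).Reachable _ := .step (t := initT q₀) .init (Or.inl (Or.inl ⟨q₀, hq₀, rfl⟩))
      ((enabled_iff ..).2 ⟨by simp, fun hk => by rw [h0.ctl _ hk]; simp⟩)
    obtain ⟨M, V, hM, hI⟩ := complete A hr _ _ r1 (h0.fire_id _)
    have r2 : (net A).Reachable _ := .step (t := finT c.1) hM (Or.inl (Or.inr ⟨c.1, hc, rfl⟩))
      ((enabled_iff ..).2 ⟨by simp, fun hk => by rw [hI.ctl _ hk]; simp⟩)
    refine ⟨_, r2, fun p hp => ?_⟩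
    obtain ⟨a, ha, rfl⟩ := mem_image.1 hp
    rcases a with S | j
    · simp [dec_enc, tok]
    · have := (hI.fire_id 1).ctl j (by simpa using ha)
      rw [finT, this]; simp [dec_enc, tok]
  · rintro ⟨M, hM, hcov⟩
    have h1 : (1 : ℕ) ∈ ctrl A := by simp [ctrl]
    have hp := hcov (enc (Sum.inr 1)) (mem_image_of_mem _ (by simpa using h1))
    simp only [dec_enc, tok, if_true] at hp
    rcases sound A hM with ⟨V, hV⟩ | ⟨q, f, V, w, q₀, hq₀, hr, hV⟩ | hL
    · rw [hV.ctl _ h1] at hp; simp at hp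
    · rw [hV.ctl _ h1] at hp; simp at hp
    · exact hL

end RsAtoTPN

/-- For every RsA `A` there are a transfer Petri net `N` and a
marking `M_F` such that `L(A) ≠ ∅` iff `M_F` is coverable in `N`. -/
theorem rsa_emptiness_to_tpn_coverability (Sigma : Type) [Fintype Sigma]
    [Nonempty Sigma] (A : RsA Sigma) :
    ∃ (N : TPN) (MF : ℕ → ℕ), RsA.Lang A ≠ ∅ ↔ N.Coverable MF :=
  ⟨RsAtoTPN.net A, _, Set.nonempty_iff_ne_empty.symm.trans (RsAtoTPN.main A)⟩
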